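/- Let n ≥ 2 and let (n_1 n_2 … n_p) and (m_1 m_2 … m_q) be two descending cycles in B_n (so n_1 > n_2 > ⋯ > n_p and m_1 > m_2 > ⋯ > m_q, all in {1, …, n}) which are parallel, i.e. for all 1 ≤ i ≤ p−1 and 1 ≤ j ≤ q−1 one has (n_i − m_j)(n_i − m_{j+1})(n_{i+1} − m_j)(n_{i+1} − m_{j+1}) > 0. Then the two descending cycles commute in B_n. -/

import Mathlib

/-!
The hypothesis says that no chord `{n_i, n_{i+1}}` crosses or meets a chord `{m_j, m_{j+1}}`, and
band generators of two such chords commute, so the two products commute factor by factor.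

For band generators `(t s)` and `(r q)` with `t > r` there are two possibilities. If
`t > s > r > q`, every letter of the first word commutes with every letter of the second. If
`t > r > q > s`, each letter `σ_i` of `(r q)` has `s < i < t - 1`, and such a `σ_i` commutes with
`(t s)` (`commute_gen_bandGen`): this follows by induction on `t` from
`(t+1 s) = σ_t (t s) σ_t⁻¹` and the braid relation.
-/

/-- The braid relations on `n` strands, as elements of the free group on
generators indexed by `Fin (n-1)` (generator `i` corresponds to `σ_{i+1}`). -/
def braidRels (n : ℕ) : Set (FreeGroup (Fin (n - 1))) :=
  {r | ∃ i j : Fin (n - 1), (i : ℕ) + 2 ≤ (j : ℕ) ∧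
      r = FreeGroup.of i * FreeGroup.of j * (FreeGroup.of i)⁻¹ * (FreeGroup.of j)⁻¹} ∪
  {r | ∃ i j : Fin (n - 1), (j : ℕ) = (i : ℕ) + 1 ∧
      r = FreeGroup.of i * FreeGroup.of j * FreeGroup.of i *
        (FreeGroup.of j * FreeGroup.of i * FreeGroup.of j)⁻¹}

/-- The braid group on `n` strands, presented by generators `σ_1, …, σ_{n-1}`
and the braid relations. -/
def BraidGroup (n : ℕ) : Type := PresentedGroup (braidRels n)

instance (n : ℕ) : Group (BraidGroup n) :=
  inferInstanceAs (Group (PresentedGroup (braidRels n)))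

/-- The Artin generator `σ_i` of the braid group `B_n`, for `1 ≤ i ≤ n-1`
(junk value `1` outside this range). -/
def braidGen (n i : ℕ) : BraidGroup n :=
  if h : 1 ≤ i ∧ i ≤ n - 1 then PresentedGroup.of ⟨i - 1, by omega⟩ else 1

/-- The braid `α_n = σ_1 σ_2⁻¹ σ_3 σ_4⁻¹ ⋯ σ_{n-1}^{(-1)^n}`. -/
def braidAlpha (n : ℕ) : BraidGroup n :=
  ((List.range (n - 1)).map fun k => braidGen n (k + 1) ^ ((-1 : ℤ) ^ k)).prod

/-- The band generator `(t s)` (for `1 ≤ s < t ≤ n`):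
`σ_{t-1} σ_{t-2} ⋯ σ_s ⋅ σ_{s+1}⁻¹ σ_{s+2}⁻¹ ⋯ σ_{t-1}⁻¹`. -/
def bandGen (n t s : ℕ) : BraidGroup n :=
  (((List.range (t - s)).map fun k => braidGen n (t - 1 - k)).prod) *
  (((List.range (t - 1 - s)).map fun k => (braidGen n (s + 1 + k))⁻¹).prod)

/-- The descending cycle `(n_1 n_2 … n_m) = (n_1 n_2)(n_2 n_3) ⋯ (n_{m-1} n_m)`
associated to a (strictly decreasing) list `[n_1, n_2, …, n_m]`. -/
def descCycle (n : ℕ) (L : List ℕ) : BraidGroup n :=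
  ((L.zip L.tail).map fun p => bandGen n p.1 p.2).prod

/-- The fundamental word `δ = σ_{n-1} σ_{n-2} ⋯ σ_1`. -/
def braidDelta (n : ℕ) : BraidGroup n :=
  ((List.range (n - 1)).map fun k => braidGen n (n - 1 - k)).prod

/-- For a permutation `π` of `{1, …, n-1}` (coded as `Equiv.Perm (Fin (n-1))`,
position/value `k` corresponding to `k+1`), the braid
`σ_{π(1)}^{(-1)^{π(1)+1}} σ_{π(2)}^{(-1)^{π(2)+1}} ⋯ σ_{π(n-1)}^{(-1)^{π(n-1)+1}}`. -/
def permutedAlpha (n : ℕ) (π : Equiv.Perm (Fin (n - 1))) : BraidGroup n :=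
  (List.ofFn fun k : Fin (n - 1) =>
    braidGen n ((π k : ℕ) + 1) ^ ((-1 : ℤ) ^ (π k : ℕ))).prod

theorem braidGen_eq_of (n : ℕ) {i : ℕ} (h : 1 ≤ i ∧ i ≤ n - 1) :
    braidGen n i = (PresentedGroup.of (rels := braidRels n) ⟨i - 1, by omega⟩ : BraidGroup n) :=
  dif_pos h

theorem braidGen_eq_one (n : ℕ) {i : ℕ} (h : ¬ (1 ≤ i ∧ i ≤ n - 1)) : braidGen n i = 1 :=
  dif_neg h

/-- Far commutativity. It needs no range condition, since out-of-range generators are `1`. -/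
theorem braidGen_commute (n : ℕ) {i j : ℕ} (h : i + 2 ≤ j) :
    Commute (braidGen n i) (braidGen n j) := by
  by_cases hi : 1 ≤ i ∧ i ≤ n - 1
  · by_cases hj : 1 ≤ j ∧ j ≤ n - 1
    · rw [braidGen_eq_of n hi, braidGen_eq_of n hj]
      have key := PresentedGroup.one_of_mem (rels := braidRels n)
        (Or.inl ⟨⟨i - 1, by omega⟩, ⟨j - 1, by omega⟩, by simp only; omega, rfl⟩)
      rw [map_mul, map_mul, map_mul, map_inv, map_inv] at key
      exact mul_inv_eq_iff_eq_mul.mp (mul_inv_eq_one.mp key)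
    · rw [braidGen_eq_one n hj]
      exact Commute.one_right _
  · rw [braidGen_eq_one n hi]
    exact Commute.one_left _

theorem braidGen_braid (n : ℕ) {i : ℕ} (h1 : 1 ≤ i) (h2 : i + 1 ≤ n - 1) :
    braidGen n i * braidGen n (i + 1) * braidGen n i =
      braidGen n (i + 1) * braidGen n i * braidGen n (i + 1) := by
  rw [braidGen_eq_of n (i := i) ⟨h1, by omega⟩, braidGen_eq_of n (i := i + 1) ⟨by omega, h2⟩]
  have key := PresentedGroup.one_of_mem (rels := braidRels n)
    (Or.inr ⟨⟨i - 1, by omega⟩, ⟨i + 1 - 1, by omega⟩, by simp only; omega, rfl⟩)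
  rw [map_mul, map_inv, mul_inv_eq_one] at key
  simp only [map_mul] at key
  exact key

/-- An element commuting with every letter of the word `(t s)` commutes with `(t s)`. -/
theorem commute_bandGen_of_letters (n : ℕ) {t s : ℕ} (x : BraidGroup n)
    (h : ∀ k, s ≤ k → k < t → Commute x (braidGen n k)) : Commute x (bandGen n t s) := by
  unfold bandGen
  refine Commute.mul_right (Commute.list_prod_right _ _ ?_) (Commute.list_prod_right _ _ ?_)
  · intro y hy
    obtain ⟨k, hk, rfl⟩ := List.mem_map.mp hy
    rw [List.mem_range] at hk
    exact h _ (by omega) (by omega)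
  · intro y hy
    obtain ⟨k, hk, rfl⟩ := List.mem_map.mp hy
    rw [List.mem_range] at hk
    exact (h _ (by omega) (by omega)).inv_right

theorem bandGen_succ (n : ℕ) {t s : ℕ} (h : s < t) :
    bandGen n (t + 1) s = braidGen n t * bandGen n t s * (braidGen n t)⁻¹ := by
  unfold bandGen
  rw [show t + 1 - s = (t - s) + 1 by omega, show t + 1 - 1 - s = (t - 1 - s) + 1 by omega,
    List.range_succ_eq_map, List.range_succ]
  simp only [List.map_cons, List.map_map, List.prod_cons, List.map_append, List.prod_append,
    List.map_nil, List.prod_nil, mul_one, Function.comp_def]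
  rw [show s + 1 + (t - 1 - s) = t by omega]
  simp only [Nat.add_sub_cancel, Nat.sub_zero, mul_assoc]
  have hk : (fun k => braidGen n (t - Nat.succ k)) = fun k => braidGen n (t - 1 - k) := by
    funext k
    congr 1
    omega
  rw [hk]

/-- `σ_i` commutes with `(t s)` when `s < i < t - 1`. -/
theorem commute_gen_bandGen (n : ℕ) {s i : ℕ} (hsi : s < i) (t : ℕ) (hit : i + 1 < t)
    (htn : t ≤ n) : Commute (braidGen n i) (bandGen n t s) := by
  induction t with
  | zero => omega
  | succ t ih =>
    rw [bandGen_succ n (by omega)]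
    rcases Nat.lt_or_ge (i + 1) t with hlt | hge
    · have hc := braidGen_commute n (show i + 2 ≤ t by omega)
      exact (hc.mul_right (ih hlt (by omega))).mul_right hc.inv_right
    · -- Here `t = i + 1`, and conjugation by `σ_{i+1} σ_i` takes `σ_{i+1}` to `σ_i`.
      obtain rfl : t = i + 1 := by omega
      rw [bandGen_succ n hsi]
      have hb := braidGen_braid n (show 1 ≤ i by omega) (by omega)
      have hc : Commute (braidGen n (i + 1)) (bandGen n i s) :=
        commute_bandGen_of_letters n _ fun k _ hk => (braidGen_commute n (by omega)).symm
      generalize braidGen n (i + 1) = b at *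
      generalize braidGen n i = a at *
      generalize bandGen n i s = c at *
      have ha : a = (b * a) * b * (b * a)⁻¹ := by
        rw [eq_mul_inv_iff_mul_eq, ← hb, mul_assoc]
      have hx : b * (a * c * a⁻¹) * b⁻¹ = (b * a) * c * (b * a)⁻¹ := by group
      rw [hx]
      have := (Commute.conj_iff (b * a)).mpr hc
      rwa [← ha] at this

theorem commute_bandGen_of_lt (n : ℕ) {t s r q : ℕ} (hqr : q < r) (hrt : r < t)
    (htn : t ≤ n)
    (h : 0 < ((t : ℤ) - r) * (t - q) * (s - r) * (s - q)) :
    Commute (bandGen n t s) (bandGen n r q) := by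
  have h0 : (0 : ℤ) < (t - r) * (t - q) := mul_pos (by omega) (by omega)
  rw [mul_assoc] at h
  have h1 := (mul_pos_iff_of_pos_left h0).mp h
  rcases mul_pos_iff.mp h1 with ⟨h2, h3⟩ | ⟨h2, h3⟩
  · -- Disjoint chords, `t > s > r > q`.
    refine commute_bandGen_of_letters n _ fun k _ hk => Commute.symm ?_
    exact commute_bandGen_of_letters n _ fun l hl _ => braidGen_commute n (by omega)
  · -- Nested chords, `t > r > q > s`.
    refine commute_bandGen_of_letters n _ fun k _ hk => Commute.symm ?_
    exact commute_gen_bandGen n (by omega) t (by omega) htn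

theorem commute_bandGen (n : ℕ) {t s r q : ℕ} (hst : s < t) (hqr : q < r) (htn : t ≤ n)
    (hrn : r ≤ n) (h : 0 < ((t : ℤ) - r) * (t - q) * (s - r) * (s - q)) :
    Commute (bandGen n t s) (bandGen n r q) := by
  rcases lt_trichotomy t r with htr | rfl | hrt
  · exact (commute_bandGen_of_lt n hst htr hrn (by convert h using 1; ring)).symm
  · simp at h
  · exact commute_bandGen_of_lt n hqr hrt htn h

theorem mem_zip_tail {L : List ℕ} {p : ℕ × ℕ} (hp : p ∈ L.zip L.tail) :
    ∃ i, ∃ hi : i + 1 < L.length, L[i] = p.1 ∧ L[i + 1] = p.2 := by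
  obtain ⟨i, hi, rfl⟩ := List.getElem_of_mem hp
  have hi' : i + 1 < L.length := by
    simp only [List.length_zip, List.length_tail] at hi
    omega
  exact ⟨i, hi', by simp, by simp⟩


/-- parallel descending cycles commute in `B_n`. -/
theorem stmt_11 (n : ℕ) (hn : 2 ≤ n) (L M : List ℕ)
    (hLdec : L.Chain' (fun a b => a > b)) (hMdec : M.Chain' (fun a b => a > b))
    (hLmem : ∀ x ∈ L, 1 ≤ x ∧ x ≤ n) (hMmem : ∀ x ∈ M, 1 ≤ x ∧ x ≤ n)
    (hpar : ∀ i j : ℕ, ∀ hi : i + 1 < L.length, ∀ hj : j + 1 < M.length,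
      0 < ((L.get ⟨i, by omega⟩ : ℤ) - (M.get ⟨j, by omega⟩ : ℤ)) *
          ((L.get ⟨i, by omega⟩ : ℤ) - (M.get ⟨j + 1, hj⟩ : ℤ)) *
          ((L.get ⟨i + 1, hi⟩ : ℤ) - (M.get ⟨j, by omega⟩ : ℤ)) *
          ((L.get ⟨i + 1, hi⟩ : ℤ) - (M.get ⟨j + 1, hj⟩ : ℤ))) :
    descCycle n L * descCycle n M = descCycle n M * descCycle n L := by
  have hLd := List.isChain_iff_getElem.mp hLdec
  have hMd := List.isChain_iff_getElem.mp hMdec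
  refine Commute.list_prod_right _ _ fun y hy => Commute.list_prod_left _ _ fun x hx => ?_
  obtain ⟨p, hp, rfl⟩ := List.mem_map.mp hx
  obtain ⟨u, hu, rfl⟩ := List.mem_map.mp hy
  obtain ⟨i, hi, hi1, hi2⟩ := mem_zip_tail hp
  obtain ⟨j, hj, hj1, hj2⟩ := mem_zip_tail hu
  rw [← hi1, ← hi2, ← hj1, ← hj2]
  exact commute_bandGen n (hLd i hi) (hMd j hj) (hLmem _ (List.getElem_mem _)).2
    (hMmem _ (List.getElem_mem _)).2 (hpar i j hi hj)
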